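/- If A and B are δ-closed subsets of a metric space X with A ∩ B ≠ ∅, then for every b ∈ B \ A the gate g_A(b) lies in A ∩ B. -/

import Mathlib

/-- `g` is a gate for `b` in `A`: `g ∈ A` and every `a ∈ A` satisfies
`d(b,a) = d(b,g) + d(g,a)`. -/
def IsGate {X : Type*} [MetricSpace X] (A : Set X) (b g : X) : Prop :=
  g ∈ A ∧ ∀ a ∈ A, dist b a = dist b g + dist g a

/-- `A` is gated in `X`: every point outside `A` has a gate in `A`. -/
def Gated {X : Type*} [MetricSpace X] (A : Set X) : Prop :=
  ∀ b ∉ A, ∃ g, IsGate A b g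

/-- `g` assigns to each point outside `A` a gate in `A`. -/
def GateMap {X : Type*} [MetricSpace X] (A : Set X) (g : X → X) : Prop :=
  ∀ b ∉ A, IsGate A b (g b)

/-- `A` is δ-closed in `X`, witnessed by the gate map `g`. -/
def DeltaClosedWith {X : Type*} [MetricSpace X] (δ : ℝ) (A : Set X) (g : X → X) : Prop :=
  GateMap A g ∧
  ∀ b ∉ A, ∀ b' ∉ A, δ < dist (g b) (g b') →
    dist b b' = dist b (g b) + dist (g b) (g b') + dist (g b') b'

/-- `A` is δ-closed in the ambient metric space `X`. -/
def DeltaClosed {X : Type*} [MetricSpace X] (δ : ℝ) (A : Set X) : Prop :=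
  ∃ g : X → X, DeltaClosedWith δ A g

/-- If `A`, `B` are δ-closed in `X` with `A ∩ B ≠ ∅`, then for `b ∈ B \ A` the
gate of `b` in `A` lies in `A ∩ B`. -/
theorem gate_mem_inter {X : Type*} [MetricSpace X] (δ : ℝ) (hδ : 0 ≤ δ)
    (A B : Set X) (hA : DeltaClosed δ A) (hB : DeltaClosed δ B)
    (hAB : (A ∩ B).Nonempty) (b : X) (hb : b ∈ B \ A)
    (g : X) (hg : IsGate A b g) : g ∈ A ∩ B := by
  obtain ⟨c, hcA, hcB⟩ := hAB
  obtain ⟨f, hf, _⟩ := hB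
  refine ⟨hg.1, ?_⟩
  by_contra hgB
  obtain ⟨h1, h2⟩ := hf g hgB
  have e1 := h2 b hb.1
  have e2 := h2 c hcB
  have e3 := hg.2 c hcA
  have t := dist_triangle b (f g) c
  rw [dist_comm g b, dist_comm (f g) b] at e1
  have h0 : dist g (f g) = 0 := by
    have := dist_nonneg (x := g) (y := f g)
    linarith
  rw [← dist_eq_zero.mp h0] at h1
  exact hgB h1
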